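/- arXiv:1809.03673 — 2 statements merged into one kernel-verified Lean document; each statement's English description precedes it below -/
import Mathlib

section
/- For every nonnegative integer N with N ≠ 14, the equation x² + y² + 3z² + 21t² = 3N + 5 has an integer solution (x, y, z, t) ∈ ℤ⁴ such that none of x, y, z is divisible by 3; moreover, for N = 14 no such solution exists. -/
open Matrix NumberTheorySymbols

/-!
For large `n ≡ 2 (mod 3)` one chooses a small `z` prime to `3` such that `m = n - 3z²` is prime to
`7` and satisfies `m ≡ 1 (mod 4)` or `m ≡ 2, 7 (mod 8)`. If `x² + y² + 21t² = m`, then `x` and `y`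
are automatically prime to `3`, so it suffices to represent `m` by `x² + y² + 21t²`.

Dirichlet's theorem yields a prime `q` for which `c = q` or `c = 2q` satisfies `c + 21 = d m` with
`d ≡ 1 (mod 21)`, and quadratic reciprocity makes `-d` a square `b²` modulo `c`. With
`a = (b² + d) / c` the form with Gram matrix `!![a, b, 1; b, c, 0; 1, 0, m]` is positive definite
of determinant `21` and represents `m`. Since `c ≡ m (mod 21)`, it omits certain residue classes
modulo `9` and `49`. Reduction theory shows that every positive definite form of determinant `21`
omitting these classes is equivalent to `x² + y² + 21z²`.
-/

/-! ### Ternary forms and their reduction -/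

/-- The integral ternary quadratic form `a x² + b y² + c z² + 2r yz + 2s xz + 2t xy`, recorded by
the entries of its Gram matrix; the cross coefficients are even. -/
structure TernaryForm where
  a : ℤ
  b : ℤ
  c : ℤ
  r : ℤ
  s : ℤ
  t : ℤ

namespace TernaryForm

variable {f g h : TernaryForm}

/-- The Gram matrix of a ternary form. -/
def gram (f : TernaryForm) : Matrix (Fin 3) (Fin 3) ℤ :=
  !![f.a, f.t, f.s; f.t, f.b, f.r; f.s, f.r, f.c]

/-- The value of a ternary form at an integer vector. -/
def eval (f : TernaryForm) (v : Fin 3 → ℤ) : ℤ :=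
  v ⬝ᵥ f.gram *ᵥ v

/-- The determinant of the Gram matrix. -/
def det (f : TernaryForm) : ℤ :=
  f.gram.det

/-- The leading principal minor of order two of the Gram matrix. -/
def minor (f : TernaryForm) : ℤ :=
  f.a * f.b - f.t ^ 2

/-- Positive definiteness on nonzero integer vectors. -/
def PosDef (f : TernaryForm) : Prop :=
  ∀ v ≠ 0, 0 < f.eval v

/-- Integral equivalence: `g` arises from `f` by an invertible integral change of variables. -/
def IsEquiv (f g : TernaryForm) : Prop :=
  ∃ U : Matrix (Fin 3) (Fin 3) ℤ, IsUnit U.det ∧ g.gram = Uᵀ * f.gram * U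

theorem eval_vec (f : TernaryForm) (x y z : ℤ) :
    f.eval ![x, y, z] = f.a * x ^ 2 + f.b * y ^ 2 + f.c * z ^ 2 +
      2 * f.r * y * z + 2 * f.s * x * z + 2 * f.t * x * y := by
  simp only [eval, gram, dotProduct, mulVec, Fin.sum_univ_three, of_apply, cons_val]
  ring

theorem det_eq (f : TernaryForm) :
    f.det = f.a * f.b * f.c + 2 * f.r * f.s * f.t
      - f.a * f.r ^ 2 - f.b * f.s ^ 2 - f.c * f.t ^ 2 := by
  simp only [det, gram, det_fin_three, of_apply, cons_val]
  ring

theorem minor_mul_eq (f : TernaryForm) :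
    f.minor * (f.a * f.c - f.s ^ 2) = f.det * f.a + (f.a * f.r - f.s * f.t) ^ 2 := by
  rw [det_eq, minor]
  ring

theorem PosDef.a_pos (hf : f.PosDef) : 0 < f.a := by
  simpa [eval_vec] using hf ![1, 0, 0] (by simp)

theorem PosDef.minor_pos (hf : f.PosDef) : 0 < f.minor := by
  have value_pos := hf ![-f.t, f.a, 0] (by simp [hf.a_pos.ne'])
  have value_eq : f.eval ![-f.t, f.a, 0] = f.a * f.minor := by
    rw [eval_vec, minor]
    ring
  exact pos_of_mul_pos_right (value_eq ▸ value_pos) hf.a_pos.le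

namespace IsEquiv

theorem refl (f : TernaryForm) : f.IsEquiv f :=
  ⟨1, by simp, by simp⟩

theorem trans (hfg : f.IsEquiv g) (hgh : g.IsEquiv h) : f.IsEquiv h := by
  obtain ⟨U, hU, hg⟩ := hfg
  obtain ⟨V, hV, hh⟩ := hgh
  exact ⟨U * V, by simpa using hU.mul hV, by simp only [hh, hg, transpose_mul, Matrix.mul_assoc]⟩

theorem det_eq (hfg : f.IsEquiv g) : g.det = f.det := by
  obtain ⟨U, hU, hg⟩ := hfg
  have hU_sq : U.det * U.det = 1 := Int.isUnit_mul_self hU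
  rw [det, det, hg, det_mul, det_mul, det_transpose]
  linear_combination f.gram.det * hU_sq

theorem exists_eval_eq (hfg : f.IsEquiv g) :
    ∃ U : Matrix (Fin 3) (Fin 3) ℤ, IsUnit U.det ∧ ∀ v, g.eval v = f.eval (U *ᵥ v) := by
  obtain ⟨U, hU, hg⟩ := hfg
  refine ⟨U, hU, fun v => ?_⟩
  rw [eval, eval, hg, ← mulVec_mulVec, ← mulVec_mulVec, dotProduct_mulVec, vecMul_transpose]

theorem posDef (hfg : f.IsEquiv g) (hf : f.PosDef) : g.PosDef := by
  obtain ⟨U, hU, eval_eq⟩ := hfg.exists_eval_eq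
  intro v hv
  rw [eval_eq]
  refine hf _ fun hUv => hv ?_
  exact mulVec_injective_of_isUnit ((isUnit_iff_isUnit_det U).2 hU) (by simpa using hUv)

theorem range_eval_eq (hfg : f.IsEquiv g) : Set.range g.eval = Set.range f.eval := by
  obtain ⟨U, hU, eval_eq⟩ := hfg.exists_eval_eq
  have eval_comp : g.eval = f.eval ∘ (U *ᵥ ·) := funext eval_eq
  rw [eval_comp]
  exact (mulVec_surjective_iff_isUnit.2 ((isUnit_iff_isUnit_det U).2 hU)).range_comp f.eval

end IsEquiv

/-- The form with the variables `x` and `y` interchanged. -/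
def swapXY (f : TernaryForm) : TernaryForm :=
  ⟨f.b, f.a, f.c, f.s, f.r, f.t⟩

/-- The form with the variables `y` and `z` interchanged. -/
def swapYZ (f : TernaryForm) : TernaryForm :=
  ⟨f.a, f.c, f.b, f.r, f.t, f.s⟩

/-- The form obtained by substituting `x + k y + l z` for `x` and `y + n z` for `y`. -/
def shear (f : TernaryForm) (k l n : ℤ) : TernaryForm where
  a := f.a
  b := f.eval ![k, 1, 0]
  c := f.eval ![l, n, 1]
  r := f.r + f.a * k * l + f.b * n + f.t * (k * n + l) + f.s * k
  s := f.s + f.t * n + f.a * l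
  t := f.t + f.a * k

theorem isEquiv_swapXY (f : TernaryForm) : f.IsEquiv f.swapXY := by
  refine ⟨!![0, 1, 0; 1, 0, 0; 0, 0, 1], by simp [det_fin_three], ?_⟩
  ext i j
  fin_cases i <;> fin_cases j <;> simp [gram, swapXY, mul_apply, Fin.sum_univ_three]

theorem isEquiv_swapYZ (f : TernaryForm) : f.IsEquiv f.swapYZ := by
  refine ⟨!![1, 0, 0; 0, 0, 1; 0, 1, 0], by simp [det_fin_three], ?_⟩
  ext i j
  fin_cases i <;> fin_cases j <;> simp [gram, swapYZ, mul_apply, Fin.sum_univ_three]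

theorem isEquiv_shear (f : TernaryForm) (k l n : ℤ) : f.IsEquiv (f.shear k l n) := by
  refine ⟨!![1, k, l; 0, 1, n; 0, 0, 1], by simp [det_fin_three], ?_⟩
  ext i j
  fin_cases i <;> fin_cases j <;>
    simp [gram, shear, eval_vec, mul_apply, Fin.sum_univ_three] <;> ring

theorem minor_shear (f : TernaryForm) (k l n : ℤ) : (f.shear k l n).minor = f.minor := by
  simp only [minor, shear, eval_vec]
  ring

/-- A reduced form: the off-diagonal coefficients are small both in `f` and in the binary form
`minor, a r - s t, a c - s²` left after completing the square in `x`, and the leading minors are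
not decreased by interchanging adjacent variables. -/
structure IsReduced (f : TernaryForm) : Prop where
  abs_t_le : |2 * f.t| ≤ f.a
  abs_s_le : |2 * f.s| ≤ f.a
  abs_cross_le : |2 * (f.a * f.r - f.s * f.t)| ≤ f.minor
  a_le_b : f.a ≤ f.b
  minor_le : f.minor ≤ f.a * f.c - f.s ^ 2

end TernaryForm

theorem exists_abs_two_mul_add_mul_le {a : ℤ} (ha : 0 < a) (t : ℤ) :
    ∃ k, |2 * (t + a * k)| ≤ a := by
  refine ⟨-((2 * t + a) / (2 * a)), abs_le.2 ?_⟩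
  have division := Int.emod_add_mul_ediv (2 * t + a) (2 * a)
  have remainder_nonneg := Int.emod_nonneg (2 * t + a) (show 2 * a ≠ 0 by omega)
  have remainder_lt := Int.emod_lt_of_pos (2 * t + a) (show 0 < 2 * a by omega)
  constructor <;> linarith

namespace TernaryForm

variable {f : TernaryForm}

theorem PosDef.exists_shear_abs_le (hf : f.PosDef) :
    ∃ k l n, |2 * (f.shear k l n).t| ≤ f.a ∧ |2 * (f.shear k l n).s| ≤ f.a ∧
      |2 * (f.a * (f.shear k l n).r - (f.shear k l n).s * (f.shear k l n).t)| ≤ f.minor := by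
  obtain ⟨n, hn⟩ := exists_abs_two_mul_add_mul_le hf.minor_pos (f.a * f.r - f.s * f.t)
  obtain ⟨l, hl⟩ := exists_abs_two_mul_add_mul_le hf.a_pos (f.s + f.t * n)
  obtain ⟨k, hk⟩ := exists_abs_two_mul_add_mul_le hf.a_pos f.t
  refine ⟨k, l, n, hk, hl, ?_⟩
  convert hn using 3
  simp only [minor, shear]
  ring

theorem PosDef.exists_isEquiv_minimal (hf : f.PosDef) :
    ∃ g, f.IsEquiv g ∧ ∀ h, f.IsEquiv h → g.a < h.a ∨ g.a = h.a ∧ g.minor ≤ h.minor := by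
  obtain ⟨g, hfg, g_min⟩ := exists_minimalFor_of_wellFoundedLT f.IsEquiv
    (fun g => toLex (g.a.toNat, g.minor.toNat)) ⟨f, .refl f⟩
  refine ⟨g, hfg, fun h hfh => ?_⟩
  have g_le := not_lt_iff_le_imp_ge.2 (g_min hfh)
  rw [not_lt, Prod.Lex.toLex_le_toLex] at g_le
  have := (hfg.posDef hf).a_pos
  have := (hfh.posDef hf).a_pos
  have := (hfh.posDef hf).minor_pos
  dsimp only at g_le
  omega

theorem PosDef.exists_isEquiv_isReduced (hf : f.PosDef) : ∃ g, f.IsEquiv g ∧ g.IsReduced := by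
  obtain ⟨g, hfg, g_min⟩ := hf.exists_isEquiv_minimal
  obtain ⟨k, l, n, ht, hs, hcross⟩ := (hfg.posDef hf).exists_shear_abs_le
  have hfg' : f.IsEquiv (g.shear k l n) := hfg.trans (g.isEquiv_shear k l n)
  refine ⟨g.shear k l n, hfg', ht, hs, (minor_shear g k l n).symm ▸ hcross, ?_, ?_⟩
  · obtain lt | ⟨eq, -⟩ := g_min _ (hfg'.trans (isEquiv_swapXY _))
    exacts [lt.le, eq.le]
  · obtain lt | ⟨-, le⟩ := g_min _ (hfg'.trans (isEquiv_swapYZ _))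
    · exact absurd lt (lt_irrefl g.a)
    · exact (minor_shear g k l n).trans_le le

namespace IsReduced

theorem three_mul_a_sq_le (hr : f.IsReduced) : 3 * f.a ^ 2 ≤ 4 * f.minor := by
  have t_sq_le := sq_le_sq' (abs_le.1 hr.abs_t_le).1 (abs_le.1 hr.abs_t_le).2
  have a_nonneg : 0 ≤ f.a := (abs_nonneg _).trans hr.abs_t_le
  have := mul_le_mul_of_nonneg_left hr.a_le_b a_nonneg
  rw [minor]
  linarith

theorem three_mul_minor_sq_le (hr : f.IsReduced) : 3 * f.minor ^ 2 ≤ 4 * f.det * f.a := by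
  have cross_sq_le := sq_le_sq' (abs_le.1 hr.abs_cross_le).1 (abs_le.1 hr.abs_cross_le).2
  have minor_nonneg : 0 ≤ f.minor := (abs_nonneg _).trans hr.abs_cross_le
  have := mul_le_mul_of_nonneg_left hr.minor_le minor_nonneg
  linarith [f.minor_mul_eq]

theorem twentySeven_mul_a_cube_le (hr : f.IsReduced) (ha : 0 < f.a) :
    27 * f.a ^ 3 ≤ 64 * f.det := by
  have minor_sq_ge : (3 * f.a ^ 2) ^ 2 ≤ (4 * f.minor) ^ 2 :=
    pow_le_pow_left₀ (by positivity) hr.three_mul_a_sq_le 2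
  refine le_of_mul_le_mul_right ?_ ha
  linarith [hr.three_mul_minor_sq_le]

end IsReduced

end TernaryForm

/-! ### Forms of determinant `21` -/

/-- The integers `3k` with `k ≡ 2 (mod 3)` and `7k` with `k` a nonzero square modulo `7`. No form in
the genus of `x² + y² + 21z²` represents any of them. -/
def IsGenusExcluded (n : ℤ) : Prop :=
  n % 9 = 6 ∨ n % 49 = 7 ∨ n % 49 = 14 ∨ n % 49 = 28

namespace TernaryForm

variable {f : TernaryForm}

/-- The diagonal form `x² + y² + 21z²`. -/
def diag21 : TernaryForm :=
  ⟨1, 1, 21, 0, 0, 0⟩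

theorem eq_diag21_or_exists_excluded_of_a_eq_one (hr : f.IsReduced) (hdet : f.det = 21)
    (ha : f.a = 1) : f = diag21 ∨ ∃ v, IsGenusExcluded (f.eval v) := by
  have minor_sq_le := hr.three_mul_minor_sq_le
  obtain ⟨ht, hs, hcross, hab, -⟩ := hr
  obtain ⟨a, b, c, r, s, t⟩ := f
  simp only at ha
  subst ha
  rw [hdet] at minor_sq_le
  simp only [det_eq, minor, abs_le] at *
  obtain rfl : t = 0 := by omega
  obtain rfl : s = 0 := by omega
  have b_le : b ≤ 5 := by nlinarith
  have r_ge : -2 ≤ r := by omega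
  have r_le : r ≤ 2 := by omega
  have cases : b = 1 ∧ r = 0 ∧ c = 21 ∨ b = 2 ∨ b = 3 ∧ c = 7 ∨ b = 5 := by
    interval_cases b <;> interval_cases r <;> omega
  obtain ⟨rfl, rfl, rfl⟩ | rfl | ⟨rfl, rfl⟩ | rfl := cases
  · exact .inl rfl
  · exact .inr ⟨![2, 1, 0], by simp [eval_vec, IsGenusExcluded]⟩
  · exact .inr ⟨![0, 0, 1], by simp [eval_vec, IsGenusExcluded]⟩
  · exact .inr ⟨![1, 1, 0], by simp [eval_vec, IsGenusExcluded]⟩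

theorem exists_excluded_of_a_eq_two (hr : f.IsReduced) (hdet : f.det = 21) (ha : f.a = 2) :
    ∃ v, IsGenusExcluded (f.eval v) := by
  have minor_sq_le := hr.three_mul_minor_sq_le
  obtain ⟨ht, hs, hcross, hab, hminor⟩ := hr
  obtain ⟨a, b, c, r, s, t⟩ := f
  simp only at ha
  subst ha
  rw [hdet] at minor_sq_le
  simp only [det_eq, minor, abs_le] at *
  have t_sq_le : t ^ 2 ≤ 1 := (sq_le_one_iff_abs_le_one t).2 (abs_le.2 (by omega))
  have minor_le : 2 * b - t ^ 2 ≤ 7 := by nlinarith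
  have b_le : b ≤ 4 := by omega
  have cases : b = 2 ∧ r = 0 ∧ s = 0 ∧ c = 7 ∨ b = 3 ∧ r = 0 ∧ c = 4 := by
    obtain rfl | rfl | rfl : t = -1 ∨ t = 0 ∨ t = 1 := by omega
    all_goals obtain rfl | rfl | rfl : s = -1 ∨ s = 0 ∨ s = 1 := by omega
    all_goals
      have r_ge : -2 ≤ r := by omega
      have r_le : r ≤ 2 := by omega
      interval_cases b <;> interval_cases r <;> omega
  obtain ⟨rfl, rfl, rfl, rfl⟩ | ⟨rfl, rfl, rfl⟩ := cases
  · exact ⟨![0, 0, 1], by simp [eval_vec, IsGenusExcluded]⟩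
  · exact ⟨![0, 1, 1], by simp [eval_vec, IsGenusExcluded]⟩

theorem exists_excluded_of_a_eq_three (hr : f.IsReduced) (hdet : f.det = 21) (ha : f.a = 3) :
    ∃ v, IsGenusExcluded (f.eval v) := by
  have minor_sq_le := hr.three_mul_minor_sq_le
  obtain ⟨ht, hs, hcross, hab, hminor⟩ := hr
  obtain ⟨a, b, c, r, s, t⟩ := f
  simp only at ha
  subst ha
  rw [hdet] at minor_sq_le
  simp only [det_eq, minor, abs_le] at *
  have t_sq_le : t ^ 2 ≤ 1 := (sq_le_one_iff_abs_le_one t).2 (abs_le.2 (by omega))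
  have minor_le : 3 * b - t ^ 2 ≤ 9 := by nlinarith
  obtain rfl : b = 3 := by omega
  have cases : c = 3 ∧ (r = 0 ∨ s = 0) := by
    obtain rfl | rfl | rfl : t = -1 ∨ t = 0 ∨ t = 1 := by omega
    all_goals obtain rfl | rfl | rfl : s = -1 ∨ s = 0 ∨ s = 1 := by omega
    all_goals
      have r_ge : -2 ≤ r := by omega
      have r_le : r ≤ 2 := by omega
      interval_cases r <;> omega
  obtain ⟨rfl, rfl | rfl⟩ := cases
  · exact ⟨![0, 1, 1], by simp [eval_vec, IsGenusExcluded]⟩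
  · exact ⟨![1, 0, 1], by simp [eval_vec, IsGenusExcluded]⟩

theorem PosDef.isEquiv_diag21 (hf : f.PosDef) (hdet : f.det = 21)
    (hex : ∀ v, ¬ IsGenusExcluded (f.eval v)) : f.IsEquiv diag21 := by
  obtain ⟨g, hfg, hr⟩ := hf.exists_isEquiv_isReduced
  have g_det : g.det = 21 := hfg.det_eq.trans hdet
  have a_pos : 0 < g.a := (hfg.posDef hf).a_pos
  have a_le : g.a ≤ 3 := by
    have a_cube_le := hr.twentySeven_mul_a_cube_le a_pos
    by_contra! four_le
    have := pow_le_pow_left₀ (by norm_num) (show (4 : ℤ) ≤ g.a from four_le) 3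
    omega
  have g_not_excluded : ¬ ∃ v, IsGenusExcluded (g.eval v) := by
    rintro ⟨v, hv⟩
    obtain ⟨w, hw⟩ := hfg.range_eval_eq.le ⟨v, rfl⟩
    exact hex w (hw ▸ hv)
  obtain ha | ha | ha : g.a = 1 ∨ g.a = 2 ∨ g.a = 3 := by omega
  · obtain rfl | excluded := eq_diag21_or_exists_excluded_of_a_eq_one hr g_det ha
    exacts [hfg, absurd excluded g_not_excluded]
  · exact absurd (exists_excluded_of_a_eq_two hr g_det ha) g_not_excluded
  · exact absurd (exists_excluded_of_a_eq_three hr g_det ha) g_not_excluded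

theorem exists_eq_vec (v : Fin 3 → ℤ) : ∃ x y z, v = ![x, y, z] :=
  ⟨v 0, v 1, v 2, (FinVec.etaExpand_eq v).symm⟩

/-- The form with Gram matrix `!![a, b, 1; b, c, 0; 1, 0, m]`, which represents `m`. -/
def bordered (a b c m : ℤ) : TernaryForm :=
  ⟨a, c, m, 0, 1, b⟩

section Bordered

variable {a b c d m D : ℤ}

theorem eval_bordered_unit (a b c m : ℤ) : (bordered a b c m).eval ![0, 0, 1] = m := by
  simp [eval_vec, bordered]

theorem det_bordered (hac : a * c = b ^ 2 + d) (hc : c + D = d * m) :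
    (bordered a b c m).det = D := by
  simp only [det_eq, bordered]
  linear_combination m * hac - hc

theorem mul_eval_bordered (hac : a * c = b ^ 2 + d) (hc : c + D = d * m) (x y z : ℤ) :
    c * m * (bordered a b c m).eval ![x, y, z] =
      c * (x + m * z) ^ 2 + m * (c * y + b * x) ^ 2 + D * x ^ 2 := by
  simp only [eval_vec, bordered]
  linear_combination x ^ 2 * m * hac - x ^ 2 * hc

theorem posDef_bordered (hac : a * c = b ^ 2 + d) (hc : c + D = d * m)
    (c_pos : 0 < c) (m_pos : 0 < m) (D_pos : 0 < D) : (bordered a b c m).PosDef := by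
  intro v hv
  obtain ⟨x, y, z, rfl⟩ := exists_eq_vec v
  refine pos_of_mul_pos_right ?_ (mul_pos c_pos m_pos).le
  rw [mul_eval_bordered hac hc]
  by_contra! nonpos
  have x_term := mul_nonneg D_pos.le (sq_nonneg x)
  have y_term := mul_nonneg m_pos.le (sq_nonneg (c * y + b * x))
  have z_term := mul_nonneg c_pos.le (sq_nonneg (x + m * z))
  obtain rfl : x = 0 := by simpa [D_pos.ne'] using (show D * x ^ 2 = 0 by linarith)
  obtain rfl : y = 0 := by
    simpa [m_pos.ne', c_pos.ne'] using (show m * (c * y + b * 0) ^ 2 = 0 by linarith)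
  obtain rfl : z = 0 := by
    simpa [m_pos.ne', c_pos.ne'] using (show c * (0 + m * z) ^ 2 = 0 by linarith)
  simp at hv

end Bordered

end TernaryForm

theorem dvd_and_dvd_of_dvd_sq_add_sq {p : ℕ} [Fact p.Prime] (hp : p % 4 = 3) {x y : ℤ}
    (h : (p : ℤ) ∣ x ^ 2 + y ^ 2) : (p : ℤ) ∣ x ∧ (p : ℤ) ∣ y := by
  simp only [← ZMod.intCast_zmod_eq_zero_iff_dvd] at h ⊢
  push_cast at h
  constructor
  · by_contra hx
    exact ZMod.mod_four_ne_three_of_sq_eq_neg_sq hx (eq_neg_of_add_eq_zero_left h) hp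
  · by_contra hy
    exact ZMod.mod_four_ne_three_of_sq_eq_neg_sq' hy (eq_neg_of_add_eq_zero_left h) hp

theorem sq_mul_eq_mul_sq_of_ternary_eq {p : ℕ} [Fact p.Prime] (hp : p % 4 = 3)
    {c m e k x y z : ℤ} (hcm : (c : ZMod p) = m) (hm : (m : ZMod p) ≠ 0)
    (h : c * m * (p * k) = c * y ^ 2 + m * z ^ 2 + p * e * x ^ 2) :
    (m : ZMod p) ^ 2 * k = e * x ^ 2 := by
  have p_dvd : (p : ℤ) ∣ y ^ 2 + z ^ 2 := by
    have h_mod := congrArg (Int.cast : ℤ → ZMod p) h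
    push_cast [CharP.cast_eq_zero, hcm] at h_mod
    rw [← ZMod.intCast_zmod_eq_zero_iff_dvd]
    refine (mul_eq_zero_iff_left hm).1 ?_
    push_cast
    linear_combination -h_mod
  obtain ⟨⟨y, rfl⟩, ⟨z, rfl⟩⟩ := dvd_and_dvd_of_dvd_sq_add_sq hp p_dvd
  have p_ne_zero : (p : ℤ) ≠ 0 := mod_cast (Fact.out : p.Prime).ne_zero
  have h_div : c * m * k = p * (c * y ^ 2 + m * z ^ 2) + e * x ^ 2 :=
    mul_left_cancel₀ p_ne_zero (by linear_combination h)
  have h_mod := congrArg (Int.cast : ℤ → ZMod p) h_div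
  push_cast [CharP.cast_eq_zero, hcm] at h_mod
  linear_combination h_mod

theorem emod_nine_ne_six_of_ternary_eq {c m n x y z : ℤ} (hcm : c ≡ m [ZMOD 3])
    (hm : ¬ 3 ∣ m) (h : c * m * n = c * y ^ 2 + m * z ^ 2 + 21 * x ^ 2) : n % 9 ≠ 6 := by
  intro hn
  obtain ⟨k, rfl⟩ : ∃ k, n = 3 * k := ⟨n / 3, by omega⟩
  have two_nonresidue : ∀ m x : ZMod 3, m ≠ 0 → m ^ 2 * 2 ≠ 7 * x ^ 2 := by decide
  have m_ne : (m : ZMod 3) ≠ 0 := (ZMod.intCast_zmod_eq_zero_iff_dvd m 3).not.2 hm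
  have k_eq : (k : ZMod 3) = 2 := (ZMod.intCast_eq_intCast_iff' k 2 3).2 (by omega)
  have key : (m : ZMod 3) ^ 2 * k = 7 * x ^ 2 :=
    sq_mul_eq_mul_sq_of_ternary_eq rfl ((ZMod.intCast_eq_intCast_iff c m 3).2 hcm) m_ne
      (e := 7) (y := y) (z := z) (by push_cast; linear_combination h)
  exact two_nonresidue m x m_ne (k_eq ▸ key)

theorem emod_fortyNine_ne_of_ternary_eq {c m n x y z : ℤ} (hcm : c ≡ m [ZMOD 7])
    (hm : ¬ 7 ∣ m) (h : c * m * n = c * y ^ 2 + m * z ^ 2 + 21 * x ^ 2) :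
    ¬ (n % 49 = 7 ∨ n % 49 = 14 ∨ n % 49 = 28) := by
  intro hn
  obtain ⟨k, rfl⟩ : ∃ k, n = 7 * k := ⟨n / 7, by omega⟩
  have three_nonresidue : ∀ m k x : ZMod 7, m ≠ 0 → k = 1 ∨ k = 2 ∨ k = 4 →
      m ^ 2 * k ≠ 3 * x ^ 2 := by decide
  have : Fact (Nat.Prime 7) := ⟨by norm_num⟩
  have m_ne : (m : ZMod 7) ≠ 0 := (ZMod.intCast_zmod_eq_zero_iff_dvd m 7).not.2 hm
  have k_square : (k : ZMod 7) = 1 ∨ (k : ZMod 7) = 2 ∨ (k : ZMod 7) = 4 := by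
    have emod_eq : k % 7 = 1 ∨ k % 7 = 2 ∨ k % 7 = 4 := by omega
    exact emod_eq.imp (ZMod.intCast_eq_intCast_iff' k 1 7).2
      (Or.imp (ZMod.intCast_eq_intCast_iff' k 2 7).2 (ZMod.intCast_eq_intCast_iff' k 4 7).2)
  have key : (m : ZMod 7) ^ 2 * k = 3 * x ^ 2 :=
    sq_mul_eq_mul_sq_of_ternary_eq rfl ((ZMod.intCast_eq_intCast_iff c m 7).2 hcm) m_ne
      (e := 3) (y := y) (z := z) (by push_cast; linear_combination h)
  exact three_nonresidue m k x m_ne k_square key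

theorem not_isGenusExcluded_of_ternary_eq {c m n x y z : ℤ} (hcm : c ≡ m [ZMOD 21])
    (hm3 : ¬ 3 ∣ m) (hm7 : ¬ 7 ∣ m)
    (h : c * m * n = c * y ^ 2 + m * z ^ 2 + 21 * x ^ 2) : ¬ IsGenusExcluded n :=
  not_or.2 ⟨emod_nine_ne_six_of_ternary_eq (hcm.of_mul_left 7) hm3 h,
    emod_fortyNine_ne_of_ternary_eq (hcm.of_mul_left 3) hm7 h⟩

open TernaryForm in
theorem exists_sq_add_sq_add_twentyOne_mul_sq_of_dvd {b c d m : ℤ} (m_pos : 0 < m) (c_pos : 0 < c)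
    (hm3 : ¬ 3 ∣ m) (hm7 : ¬ 7 ∣ m) (hc : c + 21 = d * m) (hd : d ≡ 1 [ZMOD 21])
    (hb : c ∣ b ^ 2 + d) : ∃ x y z : ℤ, x ^ 2 + y ^ 2 + 21 * z ^ 2 = m := by
  obtain ⟨a, ha⟩ := hb
  have hac : a * c = b ^ 2 + d := by rw [ha, mul_comm]
  have hcm : c ≡ m [ZMOD 21] := by
    have := hd.mul_right m
    rw [← hc, one_mul] at this
    simpa using this
  have equiv : (bordered a b c m).IsEquiv diag21 := by
    refine (posDef_bordered hac hc c_pos m_pos (by norm_num)).isEquiv_diag21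
      (det_bordered hac hc) fun v => ?_
    obtain ⟨x, y, z, rfl⟩ := exists_eq_vec v
    exact not_isGenusExcluded_of_ternary_eq hcm hm3 hm7 (mul_eval_bordered hac hc x y z)
  obtain ⟨v, hv⟩ := equiv.range_eval_eq.ge ⟨![0, 0, 1], eval_bordered_unit a b c m⟩
  obtain ⟨x, y, z, rfl⟩ := exists_eq_vec v
  exact ⟨x, y, z, by simpa [eval_vec, diag21] using hv⟩

/-! ### Dirichlet's theorem and quadratic reciprocity -/

section Residues

variable {D m q : ℕ} {d : ℤ}

theorem exists_prime_mul_add_eq {e r d₀ : ℤ} (D_pos : 0 < D) (m_pos : 0 < m)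
    (hmD : m.Coprime D) (hd₀ : IsCoprime d₀ D) (r_odd : Odd r) (hr : e * r + D = d₀ * m) :
    ∃ (q : ℕ) (d : ℤ),
      q.Prime ∧ q ≡ r [ZMOD 4 * D * m] ∧ d ≡ d₀ [ZMOD D] ∧ e * q + D = d * m := by
  have hmD_int : IsCoprime (m : ℤ) D := Nat.isCoprime_iff_coprime.2 hmD
  have coprime_four : IsCoprime r 4 := by
    simpa using (Int.isCoprime_two_right.2 r_odd).pow_right (n := 2)
  have coprime_D : IsCoprime r D := by
    refine IsCoprime.of_mul_left_right (x := e) ?_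
    rw [eq_sub_of_add_eq hr]
    simpa using (IsCoprime.sub_mul_left_left_iff (z := 1)).2 (hd₀.mul_left hmD_int)
  have coprime_m : IsCoprime r m := by
    refine IsCoprime.of_mul_left_right (x := e) ?_
    rw [eq_sub_of_add_eq hr]
    exact IsCoprime.mul_sub_right_left_iff.2 hmD_int.symm
  have coprime : IsCoprime r ((4 * D * m : ℕ) : ℤ) := by
    push_cast
    exact (coprime_four.mul_right coprime_D).mul_right coprime_m
  obtain ⟨q, -, hq, hqr⟩ := Nat.forall_exists_prime_gt_and_zmodEq 0 (by positivity) coprime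
  obtain ⟨j, hj⟩ := hqr.symm.dvd
  push_cast at hqr hj
  refine ⟨q, d₀ + 4 * D * e * j, hq, hqr, ?_, by linear_combination hr + e * hj⟩
  exact (Int.modEq_iff_dvd.2 ⟨4 * e * j, by ring⟩).symm

theorem jacobiSym_neg_natCast {n : ℕ} (hD : D % 4 = 1) (hn : Odd n) :
    J(-D | n) = ZMod.χ₄ n * J(n | D) := by
  rw [jacobiSym.neg _ hn, jacobiSym.quadratic_reciprocity_one_mod_four hD hn]

theorem jacobiSym_natCast_ne_zero (h : m.Coprime D) : J(m | D) ≠ 0 :=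
  jacobiSym.ne_zero (by simpa using h)

theorem jacobiSym_two_of_mod_eight_eq_five {n : ℕ} (hn : n % 8 = 5) : J(2 | n) = -1 := by
  rw [jacobiSym.at_two (Nat.odd_iff.2 (by omega)), ZMod.χ₈_nat_mod_eight, hn]
  rfl

theorem jacobiSym_two_of_mod_eight_eq_seven {n : ℕ} (hn : n % 8 = 7) : J(2 | n) = 1 := by
  rw [jacobiSym.at_two (Nat.odd_iff.2 (by omega)), ZMod.χ₈_nat_mod_eight, hn]
  rfl

theorem jacobiSym_neg_eq_one_of_add_eq_mul {u : ℕ} (hD : D % 4 = 1) (hm : m % 4 = 1)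
    (hq : q % 4 = 1) (hu : J(u | q) = J(u | D)) (hcop : (u * m).Coprime D) (hd : d ≡ 1 [ZMOD D])
    (h : (q : ℤ) + D = d * (u * m)) : J(-d | q) = 1 := by
  have m_odd : Odd m := Nat.odd_iff.2 (by omega)
  have q_odd : Odd q := Nat.odd_iff.2 (by omega)
  have q_mod_D : J(q | D) = J((u * m : ℕ) | D) := by
    refine jacobiSym.mod_left' ?_
    have := hd.mul_right (u * m)
    rw [← h, one_mul] at this
    simpa [Int.ModEq] using this
  have q_mod_m : J(q | m) = J(-D | m) :=
    jacobiSym.mod_left' (Int.modEq_iff_dvd.2 ⟨-(d * u), by linear_combination -h⟩)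
  have um_mod_q : J((u * m : ℕ) | q) = J((u * m : ℕ) | D) := by
    push_cast
    rw [jacobiSym.mul_left, jacobiSym.mul_left, hu,
      jacobiSym.quadratic_reciprocity_one_mod_four hm q_odd, q_mod_m,
      jacobiSym_neg_natCast hD m_odd, ZMod.χ₄_nat_one_mod_four hm, one_mul]
  have product : J(-d | q) * J((u * m : ℕ) | q) = J(-D | q) := by
    rw [← jacobiSym.mul_left]
    exact jacobiSym.mod_left' (Int.modEq_iff_dvd.2 ⟨1, by push_cast; linear_combination -h⟩)
  rw [um_mod_q, jacobiSym_neg_natCast hD q_odd, ZMod.χ₄_nat_one_mod_four hq, q_mod_D] at product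
  exact mul_right_cancel₀ (jacobiSym_natCast_ne_zero hcop) product

theorem jacobiSym_neg_eq_one_of_two_mul_add_eq_mul (hD : D % 8 = 5) (hm : m % 8 = 7) (hq : Odd q)
    (hcop : m.Coprime D) (hd : d ≡ 1 [ZMOD D]) (h : 2 * (q : ℤ) + D = d * m) :
    J(-d | q) = 1 := by
  have m_odd : Odd m := Nat.odd_iff.2 (by omega)
  have q_mod_D : J(q | D) = -J(m | D) := by
    have two_q : J(2 * q | D) = J(m | D) := by
      refine jacobiSym.mod_left' ?_
      have := hd.mul_right m
      rw [← h, one_mul] at this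
      simpa [Int.ModEq] using this
    rw [jacobiSym.mul_left, jacobiSym_two_of_mod_eight_eq_five hD] at two_q
    linarith
  have q_mod_m : J(q | m) = -J(m | D) := by
    have two_q : J(2 * q | m) = J(-D | m) :=
      jacobiSym.mod_left' (Int.modEq_iff_dvd.2 ⟨-d, by linear_combination -h⟩)
    rwa [jacobiSym.mul_left, jacobiSym_two_of_mod_eight_eq_seven hm, one_mul,
      jacobiSym_neg_natCast (by omega) m_odd, ZMod.χ₄_nat_three_mod_four (by omega),
      neg_one_mul] at two_q
  have reciprocity : J(m | q) = ZMod.χ₄ q * J(q | m) := by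
    obtain hq4 | hq4 := Nat.odd_mod_four_iff.1 (Nat.odd_iff.1 hq)
    · rw [ZMod.χ₄_nat_one_mod_four hq4, one_mul,
        jacobiSym.quadratic_reciprocity_one_mod_four' m_odd hq4]
    · rw [ZMod.χ₄_nat_three_mod_four hq4, neg_one_mul,
        jacobiSym.quadratic_reciprocity_three_mod_four (by omega) hq4]
  have product : J(-d | q) * J(m | q) = J(-D | q) := by
    rw [← jacobiSym.mul_left]
    exact jacobiSym.mod_left' (Int.modEq_iff_dvd.2 ⟨2, by linear_combination -h⟩)
  have symbol_ne_zero : J(m | q) ≠ 0 := by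
    rw [reciprocity, q_mod_m, ← jacobiSym.at_neg_one hq]
    exact mul_ne_zero (jacobiSym.ne_zero (by simp))
      (neg_ne_zero.2 (jacobiSym_natCast_ne_zero hcop))
  rw [jacobiSym_neg_natCast (by omega) hq, q_mod_D, ← q_mod_m, ← reciprocity] at product
  exact mul_right_cancel₀ symbol_ne_zero (product.trans (one_mul _).symm)

theorem exists_dvd_sq_add_of_jacobiSym_eq_one [Fact q.Prime] (h : J(-d | q) = 1) :
    ∃ b : ℤ, (q : ℤ) ∣ b ^ 2 + d := by
  obtain ⟨u, hu⟩ := ZMod.isSquare_of_jacobiSym_eq_one h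
  obtain ⟨b, rfl⟩ := ZMod.intCast_surjective u
  refine ⟨b, (ZMod.intCast_zmod_eq_zero_iff_dvd _ _).1 ?_⟩
  push_cast at hu ⊢
  linear_combination -hu

theorem exists_two_mul_dvd_sq_add {n b : ℤ} (hn : Odd n) (hb : n ∣ b ^ 2 + d) :
    ∃ b', 2 * n ∣ b' ^ 2 + d := by
  have coprime : IsCoprime 2 n := Int.isCoprime_two_left.2 hn
  obtain even | odd := Int.even_or_odd (b ^ 2 + d)
  · exact ⟨b, coprime.mul_dvd even.two_dvd hb⟩
  · have shifted : (b + n) ^ 2 + d = b ^ 2 + d + n * (2 * b + n) := by ring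
    refine ⟨b + n, shifted ▸ coprime.mul_dvd (Even.two_dvd ?_) (dvd_add hb (dvd_mul_right _ _))⟩
    exact odd.add_odd (hn.mul ((even_two_mul b).add_odd hn))

end Residues

/-! ### Numbers represented by `x² + y² + 21z²` -/

section Representation

variable {m : ℕ}

theorem coprime_twentyOne (hm3 : ¬ 3 ∣ m) (hm7 : ¬ 7 ∣ m) : m.Coprime 21 :=
  Nat.Coprime.mul_right (m := 3) (n := 7)
    ((Nat.Prime.coprime_iff_not_dvd Nat.prime_three).2 hm3).symm
    ((Nat.Prime.coprime_iff_not_dvd (by norm_num)).2 hm7).symm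

theorem exists_sq_add_sq_add_twentyOne_mul_sq_of_mod_four_eq_one (hm3 : ¬ 3 ∣ m) (hm7 : ¬ 7 ∣ m)
    (hm : m % 4 = 1) : ∃ x y z : ℤ, x ^ 2 + y ^ 2 + 21 * z ^ 2 = m := by
  have hcop : m.Coprime 21 := coprime_twentyOne hm3 hm7
  -- `d₀ = 22` rather than `1`, because `m - 21` is even.
  obtain ⟨q, d, hq, hqr, hd₀, h⟩ := exists_prime_mul_add_eq (e := 1) (r := 22 * m - 21)
    (d₀ := 22) (by norm_num) (by omega) hcop (by norm_num) (by grind) (by push_cast; ring)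
  have : Fact q.Prime := ⟨hq⟩
  have hd : d ≡ 1 [ZMOD 21] := hd₀.trans (by decide)
  have q_mod : q % 4 = 1 := by
    have q_modEq : (q : ℤ) ≡ 22 * m - 21 [ZMOD 4] := hqr.of_dvd ⟨21 * m, by push_cast; ring⟩
    rw [Int.ModEq] at q_modEq
    omega
  have symbol : J(-d | q) = 1 := jacobiSym_neg_eq_one_of_add_eq_mul (m := m) (u := 1)
    rfl hm q_mod (by simp) (by simpa using hcop) hd (by simpa using h)
  obtain ⟨b, hb⟩ := exists_dvd_sq_add_of_jacobiSym_eq_one symbol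
  exact exists_sq_add_sq_add_twentyOne_mul_sq_of_dvd (by omega) (mod_cast hq.pos) (by omega)
    (by omega) (by simpa using h) hd hb

theorem exists_sq_add_sq_add_twentyOne_mul_sq_of_mod_eight_eq_two (hm3 : ¬ 3 ∣ m) (hm7 : ¬ 7 ∣ m)
    (hm : m % 8 = 2) : ∃ x y z : ℤ, x ^ 2 + y ^ 2 + 21 * z ^ 2 = m := by
  have hcop : m.Coprime 21 := coprime_twentyOne hm3 hm7
  obtain ⟨k, rfl⟩ : 2 ∣ m := by omega
  obtain ⟨q, d, hq, hqr, hd, h⟩ := exists_prime_mul_add_eq (e := 1) (r := (2 * k : ℕ) - 21)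
    (d₀ := 1) (by norm_num) (by omega) hcop isCoprime_one_left (by grind) (by push_cast; ring)
  have : Fact q.Prime := ⟨hq⟩
  have q_mod : q % 8 = 5 := by
    have q_modEq : (q : ℤ) ≡ (2 * k : ℕ) - 21 [ZMOD 8] :=
      hqr.of_dvd ⟨21 * k, by push_cast; ring⟩
    rw [Int.ModEq] at q_modEq
    omega
  have two_symbol : J((2 : ℕ) | q) = J((2 : ℕ) | 21) :=
    (jacobiSym_two_of_mod_eight_eq_five q_mod).trans (jacobiSym_two_of_mod_eight_eq_five rfl).symm
  have symbol : J(-d | q) = 1 := jacobiSym_neg_eq_one_of_add_eq_mul (m := k) (u := 2)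
    rfl (by omega) (by omega) two_symbol hcop hd (by simpa using h)
  obtain ⟨b, hb⟩ := exists_dvd_sq_add_of_jacobiSym_eq_one symbol
  exact exists_sq_add_sq_add_twentyOne_mul_sq_of_dvd (by omega) (mod_cast hq.pos) (by omega)
    (by omega) (by simpa using h) hd hb

theorem exists_sq_add_sq_add_twentyOne_mul_sq_of_mod_eight_eq_seven (hm3 : ¬ 3 ∣ m)
    (hm7 : ¬ 7 ∣ m) (hm : m % 8 = 7) : ∃ x y z : ℤ, x ^ 2 + y ^ 2 + 21 * z ^ 2 = m := by
  have hcop : m.Coprime 21 := coprime_twentyOne hm3 hm7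
  obtain ⟨r, hr⟩ : ∃ r : ℤ, 2 * r + 21 = m := ⟨(m - 21) / 2, by omega⟩
  have r_odd : Odd r := Int.odd_iff.2 (by omega)
  obtain ⟨q, d, hq, hqr, hd, h⟩ := exists_prime_mul_add_eq (e := 2) (d₀ := 1) (by norm_num)
    (by omega) hcop isCoprime_one_left r_odd (by simpa using hr)
  have : Fact q.Prime := ⟨hq⟩
  have q_odd : Odd q := by
    have q_modEq : (q : ℤ) ≡ r [ZMOD 2] := hqr.of_dvd ⟨42 * m, by push_cast; ring⟩
    rw [Int.ModEq, Int.odd_iff.1 r_odd] at q_modEq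
    exact Nat.odd_iff.2 (by omega)
  have symbol : J(-d | q) = 1 :=
    jacobiSym_neg_eq_one_of_two_mul_add_eq_mul rfl hm q_odd hcop hd h
  obtain ⟨_, hb₀⟩ := exists_dvd_sq_add_of_jacobiSym_eq_one symbol
  obtain ⟨b, hb⟩ := exists_two_mul_dvd_sq_add (mod_cast q_odd) hb₀
  have two_q_pos : 0 < 2 * (q : ℤ) := mod_cast Nat.mul_pos two_pos hq.pos
  exact exists_sq_add_sq_add_twentyOne_mul_sq_of_dvd (by omega) two_q_pos (by omega) (by omega)
    h hd hb

theorem exists_sq_add_sq_add_twentyOne_mul_sq {m : ℤ} (m_pos : 0 < m) (hm3 : ¬ 3 ∣ m)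
    (hm7 : ¬ 7 ∣ m) (hm : m % 4 = 1 ∨ m % 8 = 2 ∨ m % 8 = 7) :
    ∃ x y z : ℤ, x ^ 2 + y ^ 2 + 21 * z ^ 2 = m := by
  lift m to ℕ using m_pos.le
  obtain hm | hm | hm := hm
  · exact exists_sq_add_sq_add_twentyOne_mul_sq_of_mod_four_eq_one
      (by omega) (by omega) (by omega)
  · exact exists_sq_add_sq_add_twentyOne_mul_sq_of_mod_eight_eq_two
      (by omega) (by omega) (by omega)
  · exact exists_sq_add_sq_add_twentyOne_mul_sq_of_mod_eight_eq_seven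
      (by omega) (by omega) (by omega)

end Representation

/-! ### The quaternary form -/

-- The two candidates for `3z²` agree modulo `4`, respectively `8`, and differ modulo `7`.
theorem exists_admissible_sub_three_mul_sq (n : ℤ) :
    ∃ z : ℤ, 3 * z ^ 2 ≤ 300 ∧ ¬ 3 ∣ z ∧ ¬ 7 ∣ n - 3 * z ^ 2 ∧
      ((n - 3 * z ^ 2) % 4 = 1 ∨ (n - 3 * z ^ 2) % 8 = 2 ∨ (n - 3 * z ^ 2) % 8 = 7) := by
  have residues : n % 4 = 0 ∨ n % 4 = 1 ∨ (n % 8 = 2 ∨ n % 8 = 7) ∨ (n % 8 = 3 ∨ n % 8 = 6) := by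
    omega
  obtain h | h | h | h := residues
  · by_cases h7 : 7 ∣ n - 3 * 1 ^ 2
    · exact ⟨5, by omega⟩
    · exact ⟨1, by omega⟩
  · by_cases h7 : 7 ∣ n - 3 * 2 ^ 2
    · exact ⟨4, by omega⟩
    · exact ⟨2, by omega⟩
  · by_cases h7 : 7 ∣ n - 3 * 4 ^ 2
    · exact ⟨8, by omega⟩
    · exact ⟨4, by omega⟩
  · by_cases h7 : 7 ∣ n - 3 * 2 ^ 2
    · exact ⟨10, by omega⟩
    · exact ⟨2, by omega⟩

theorem not_three_dvd_of_sq_add_sq_emod_three_eq_two {x y : ℤ} (h : (x ^ 2 + y ^ 2) % 3 = 2) :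
    ¬ 3 ∣ x ∧ ¬ 3 ∣ y := by
  have residues : ∀ x y : ZMod 3, x ^ 2 + y ^ 2 = 2 → x ≠ 0 ∧ y ≠ 0 := by decide
  have h_mod : (x : ZMod 3) ^ 2 + (y : ZMod 3) ^ 2 = 2 :=
    mod_cast (ZMod.intCast_eq_intCast_iff' (x ^ 2 + y ^ 2) 2 3).2 h
  simpa only [ne_eq, ZMod.intCast_zmod_eq_zero_iff_dvd, Nat.cast_ofNat] using residues x y h_mod

theorem exists_representation_of_three_hundred_lt {n : ℤ} (hn : 300 < n) (hn3 : n % 3 = 2) :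
    ∃ x y z t : ℤ, ¬ 3 ∣ x ∧ ¬ 3 ∣ y ∧ ¬ 3 ∣ z ∧
      x ^ 2 + y ^ 2 + 3 * z ^ 2 + 21 * t ^ 2 = n := by
  obtain ⟨z, z_le, hz, hm7, hm⟩ := exists_admissible_sub_three_mul_sq n
  obtain ⟨x, y, t, h⟩ := exists_sq_add_sq_add_twentyOne_mul_sq (by omega) (by omega) hm7 hm
  obtain ⟨hx, hy⟩ := not_three_dvd_of_sq_add_sq_emod_three_eq_two (x := x) (y := y) (by omega)
  exact ⟨x, y, z, t, hx, hy, hz, by linarith⟩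

theorem exists_representation_of_lt_ninetyNine {N : ℕ} (N_lt : N < 99) (N_ne : N ≠ 14) :
    ∃ x y z t : ℤ, ¬ 3 ∣ x ∧ ¬ 3 ∣ y ∧ ¬ 3 ∣ z ∧
      x ^ 2 + y ^ 2 + 3 * z ^ 2 + 21 * t ^ 2 = 3 * N + 5 := by
  have search : ∀ N : ℕ, N < 99 → N ≠ 14 →
      ∃ x < 11, ¬ 3 ∣ x ∧ ∃ y < 17, ¬ 3 ∣ y ∧ ∃ z < 5, ¬ 3 ∣ z ∧ ∃ t < 2,
        x ^ 2 + y ^ 2 + 3 * z ^ 2 + 21 * t ^ 2 = 3 * N + 5 := by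
    decide +kernel
  obtain ⟨x, -, hx, y, -, hy, z, -, hz, t, -, h⟩ := search N N_lt N_ne
  exact ⟨x, y, z, t, by omega, by omega, by omega, mod_cast h⟩

theorem not_exists_representation_fortySeven :
    ¬ ∃ x y z t : ℤ, ¬ 3 ∣ x ∧ ¬ 3 ∣ y ∧ ¬ 3 ∣ z ∧
      x ^ 2 + y ^ 2 + 3 * z ^ 2 + 21 * t ^ 2 = 47 := by
  have search : ¬ ∃ x < 7, ¬ 3 ∣ x ∧ ∃ y < 7, ¬ 3 ∣ y ∧ ∃ z < 4, ¬ 3 ∣ z ∧ ∃ t < 2,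
      x ^ 2 + y ^ 2 + 3 * z ^ 2 + 21 * t ^ 2 = 47 := by
    decide +kernel
  rintro ⟨x, y, z, t, hx, hy, hz, h⟩
  have h_natAbs : x.natAbs ^ 2 + y.natAbs ^ 2 + 3 * z.natAbs ^ 2 + 21 * t.natAbs ^ 2 = 47 := by
    zify
    simpa only [sq_abs] using h
  refine search ⟨x.natAbs, ?_, by omega, y.natAbs, ?_, by omega, z.natAbs, ?_, by omega,
    t.natAbs, ?_, h_natAbs⟩
  all_goals exact lt_of_pow_lt_pow_left₀ 2 (Nat.zero_le _) (by omega)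

theorem case_5_14_representation :
    (∀ N : ℤ, 0 ≤ N → N ≠ 14 →
      ∃ x y z t : ℤ, ¬ (3 : ℤ) ∣ x ∧ ¬ (3 : ℤ) ∣ y ∧ ¬ (3 : ℤ) ∣ z ∧
        x ^ 2 + y ^ 2 + 3 * z ^ 2 + 21 * t ^ 2 = 3 * N + 5) ∧
    ¬ ∃ x y z t : ℤ, ¬ (3 : ℤ) ∣ x ∧ ¬ (3 : ℤ) ∣ y ∧ ¬ (3 : ℤ) ∣ z ∧
        x ^ 2 + y ^ 2 + 3 * z ^ 2 + 21 * t ^ 2 = 3 * 14 + 5 := by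
  refine ⟨fun N N_nonneg N_ne => ?_, not_exists_representation_fortySeven⟩
  obtain small | large := lt_or_ge N 99
  · lift N to ℕ using N_nonneg
    exact exists_representation_of_lt_ninetyNine (by omega) (by omega)
  · exact exists_representation_of_three_hundred_lt (by omega) (by omega)
end

section
/- The quinary mixed sum x² + 2y² + 5(3z² − 2z) + 5(3t² − 2t) + 5(3s² − 2s) represents a nonnegative integer N (i.e., the equation x² + 2y² + 5(3z² − 2z) + 5(3t² − 2t) + 5(3s² − 2s) = N has an integer solution (x, y, z, t, s) ∈ ℤ⁵) if and only if N ≠ 20. In other words, the set of nonnegative integers not represented by x²+2y²+5P₈(z)+5P₈(t)+5P₈(s) is exactly {20}. -/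
/-!
The value `20` is missed because `x² + 2y²` is anisotropic modulo `5`: in a representation of `20`
the part `x² + 2y²` is divisible by `25`, hence zero, and `4` is not a sum of three of the octagonal
numbers `0, 1, 5, …`.

Conversely, `3 P₈(z) + 1 = (3z - 1)²`, so `m` is a sum of three octagonal numbers as soon as
`3m + 3` is a sum of three squares prime to `3`. This holds if `m ≡ 1, 2 (mod 4)` and
`m ≢ 2 (mod 3)`, and for `N ≥ 100` one can always choose `x, y` such that `N - x² - 2y² = 5m` with
such an `m`.

To see that every `n ≡ 1, 2 (mod 4)` is a sum of three squares, take a prime `p ≡ 1 (mod 4)` with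
`p ≡ -1 (mod n)` modulo which `n` is a square. Then `x² + p y² = n z²` has a nontrivial solution by
Thue's pigeonhole argument, and since `p` is a sum of two squares, `n` is a sum of three rational
squares. The descent of Davenport and Cassels makes them integral.
-/

open QuadraticMap

/-! ### The Davenport–Cassels descent -/

section DavenportCassels

variable {M : Type*} [AddCommGroup M] {Q : QuadraticForm ℤ M}

theorem apply_sub_smul (t : ℤ) (v w : M) :
    Q (v - t • w) = Q v - t * polar Q v w + t ^ 2 * Q w := by
  rw [sub_eq_add_neg, ← neg_smul, QuadraticMap.map_add Q, QuadraticMap.map_smul, polar_smul_right,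
    smul_eq_mul, smul_eq_mul]
  ring

-- The line through `w` and `v / t` meets the quadric `Q = n` again at a point with denominator
-- `(Q w - n) * t + (2 * n * t - polar Q v w)`.
theorem apply_second_intersection {n t : ℤ} {v : M} (hv : Q v = n * t ^ 2) (w : M) :
    Q ((Q w - n) • v + (2 * n * t - polar Q v w) • w) =
      n * ((Q w - n) * t + (2 * n * t - polar Q v w)) ^ 2 := by
  rw [QuadraticMap.map_add Q, QuadraticMap.map_smul, QuadraticMap.map_smul, polar_smul_left,
    polar_smul_right, hv]
  simp only [smul_eq_mul]
  ring

/-- **Davenport–Cassels**: `happrox` says that every rational point `v / t` is at `Q`-distance less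
than `1` from an integral point. -/
theorem exists_apply_eq_of_apply_eq_mul_sq (hQ : Q.PosDef)
    (happrox : ∀ (t : ℕ) (v : M), t ≠ 0 → ∃ w, Q (v - (t : ℤ) • w) < (t : ℤ) ^ 2)
    {n : ℤ} {t : ℕ} (ht : t ≠ 0) {v : M} (hv : Q v = n * t ^ 2) : ∃ w, Q w = n := by
  induction t using Nat.strong_induction_on generalizing v with
  | h t ih =>
    have ht0 : (0 : ℤ) < t := by positivity
    obtain ⟨w, hw⟩ := happrox t v ht
    obtain ⟨s, hs⟩ : ∃ s, s = (Q w - n) * t + (2 * n * t - polar Q v w) := ⟨_, rfl⟩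
    have hts : Q (v - (t : ℤ) • w) = t * s := by
      rw [apply_sub_smul, hv, hs]
      ring
    have hs0 : 0 ≤ s := nonneg_of_mul_nonneg_right (hts ▸ hQ.nonneg _) ht0
    have hst : s < t := by
      rw [hts, pow_two] at hw
      exact lt_of_mul_lt_mul_left hw ht0.le
    lift s to ℕ using hs0
    obtain rfl | hs_ne := eq_or_ne s 0
    · have hvw : v = (t : ℤ) • w := by
        rw [← sub_eq_zero]
        exact hQ.anisotropic _ (by simpa using hts)
      refine ⟨w, mul_right_cancel₀ (pow_ne_zero 2 ht0.ne') ?_⟩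
      rw [← hv, hvw, QuadraticMap.map_smul, smul_eq_mul]
      ring
    · exact ih s (by exact_mod_cast hst) hs_ne (hs ▸ apply_second_intersection hv w)

end DavenportCassels

theorem exists_four_mul_sub_mul_sq_le (a : ℤ) {t : ℕ} (ht : t ≠ 0) :
    ∃ b : ℤ, 4 * (a - t * b) ^ 2 ≤ (t : ℤ) ^ 2 := by
  refine ⟨a.bdiv t, ?_⟩
  have hr : a - t * a.bdiv t = a.bmod t := by linarith [Int.bmod_add_bdiv a t]
  have hlower := Int.le_bmod (x := a) (Nat.pos_of_ne_zero ht)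
  have hupper := Int.bmod_le (x := a) (Nat.pos_of_ne_zero ht)
  have habs : |2 * a.bmod t| ≤ t := abs_le.2 ⟨by omega, by omega⟩
  rw [hr]
  calc 4 * a.bmod t ^ 2 = (2 * a.bmod t) ^ 2 := by ring
    _ ≤ (t : ℤ) ^ 2 := sq_le_sq.2 (by simpa using habs)

theorem exists_sum_sq_eq_of_sum_sq_eq_mul_sq {ι : Type*} [Fintype ι] (hι : Fintype.card ι ≤ 3)
    {n : ℤ} {t : ℕ} (ht : t ≠ 0) {v : ι → ℤ} (hv : ∑ i, v i ^ 2 = n * t ^ 2) :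
    ∃ w : ι → ℤ, ∑ i, w i ^ 2 = n := by
  let Q : QuadraticForm ℤ (ι → ℤ) := QuadraticMap.pi fun _ => QuadraticMap.sq
  have hQ (u : ι → ℤ) : Q u = ∑ i, u i ^ 2 := by simp [Q, pow_two]
  have hpos : Q.PosDef := posDef_pi_iff.2 fun _ _ hx => mul_self_pos.2 hx
  have happrox (s : ℕ) (u : ι → ℤ) (hs : s ≠ 0) : ∃ w, Q (u - (s : ℤ) • w) < (s : ℤ) ^ 2 := by
    choose w hw using fun i => exists_four_mul_sub_mul_sq_le (u i) hs
    have hsum : 4 * Q (u - (s : ℤ) • w) ≤ 3 * (s : ℤ) ^ 2 :=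
      calc 4 * Q (u - (s : ℤ) • w) = ∑ i, 4 * (u i - s * w i) ^ 2 := by
            simp [hQ, Finset.mul_sum]
        _ ≤ ∑ _i : ι, (s : ℤ) ^ 2 := Finset.sum_le_sum fun i _ => hw i
        _ = Fintype.card ι * (s : ℤ) ^ 2 := by simp
        _ ≤ 3 * (s : ℤ) ^ 2 := by gcongr; exact_mod_cast hι
    have hs_sq : 0 < (s : ℤ) ^ 2 := by positivity
    exact ⟨w, by linarith⟩
  obtain ⟨w, hw⟩ := exists_apply_eq_of_apply_eq_mul_sq hpos happrox ht (by rw [hQ, hv])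
  exact ⟨w, by rw [← hQ, hw]⟩

/-! ### Thue's lemma and the equation `x² + m y² = n z²` -/

theorem le_sqrt_pred_add_one_sq (k : ℕ) : k ≤ (Nat.sqrt (k - 1) + 1) ^ 2 := by
  have := Nat.lt_succ_sqrt' (k - 1)
  rw [Nat.succ_eq_add_one] at this
  omega

theorem exists_ne_zero_map_eq_zero_of_card_sq_le {ι G : Type*} [Fintype ι] [AddGroup G] [Finite G]
    (f : (ι → ℤ) →+ G) {k : ι → ℕ} (hk : Nat.card G ^ 2 ≤ ∏ i, k i) (hsq : ∃ i, ¬IsSquare (k i)) :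
    ∃ v ≠ 0, f v = 0 ∧ ∀ i, v i ^ 2 < k i := by
  classical
  have := Fintype.ofFinite G
  have hcard : 0 < Nat.card G := Nat.card_pos
  have hkpos (i : ι) : 0 < k i := by
    have hprod : 0 < ∏ i, k i := (pow_pos hcard 2).trans_le hk
    exact Nat.pos_of_ne_zero fun hi => hprod.ne' (Finset.prod_eq_zero (Finset.mem_univ i) hi)
  let side (i : ι) : ℕ := Nat.sqrt (k i - 1) + 1
  let box : Finset (ι → ℤ) := Fintype.piFinset fun i => Finset.Ico 0 (side i : ℤ)
  have hbox : Nat.card G < box.card := by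
    obtain ⟨j, hj⟩ := hsq
    have hside (i : ι) : k i ≤ side i ^ 2 := le_sqrt_pred_add_one_sq (k i)
    have hprod : ∏ i, k i < ∏ i, side i ^ 2 :=
      Finset.prod_lt_prod (fun i _ => hkpos i) (fun i _ => hside i)
        ⟨j, Finset.mem_univ j, (hside j).lt_of_ne fun h => hj ⟨side j, by rw [h, pow_two]⟩⟩
    rw [Finset.prod_pow] at hprod
    simpa [box] using lt_of_pow_lt_pow_left₀ 2 (Nat.zero_le _) (hk.trans_lt hprod)
  obtain ⟨x, hx, y, hy, hne, hxy⟩ := Finset.exists_ne_map_eq_of_card_lt_of_maps_to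
    (t := Finset.univ) (f := f) (by simpa using hbox)
    (fun _ _ => Finset.mem_coe.2 (Finset.mem_univ _))
  refine ⟨x - y, sub_ne_zero.2 hne, by rw [map_sub, hxy, sub_self], fun i => ?_⟩
  have hxi := Finset.mem_Ico.1 (Fintype.mem_piFinset.1 hx i)
  have hyi := Finset.mem_Ico.1 (Fintype.mem_piFinset.1 hy i)
  have habs : |x i - y i| ≤ (Nat.sqrt (k i - 1) : ℤ) := by
    simp only [side, Nat.cast_add, Nat.cast_one] at hxi hyi
    exact abs_le.2 ⟨by linarith, by linarith⟩
  have hroot : (Nat.sqrt (k i - 1) : ℤ) ^ 2 < k i := by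
    have h := Nat.sqrt_le' (k i - 1)
    exact_mod_cast (by have := hkpos i; omega : Nat.sqrt (k i - 1) ^ 2 < k i)
  exact (sq_le_sq.2 (habs.trans (le_abs_self _))).trans_lt hroot

theorem exists_ne_zero_sq_lt_of_not_isSquare {m n : ℕ} (hm : m ≠ 0) (hn : ¬IsSquare n)
    (a : ZMod n) (b : ZMod m) :
    ∃ x y z : ℤ, (x ≠ 0 ∨ y ≠ 0 ∨ z ≠ 0) ∧ (x : ZMod n) = a * y ∧ (x : ZMod m) = b * z ∧
      x ^ 2 < m * n ∧ y ^ 2 < n ∧ z ^ 2 < m := by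
  have : NeZero m := ⟨hm⟩
  have : NeZero n := ⟨fun h => hn (h ▸ IsSquare.zero)⟩
  let f : (Fin 3 → ℤ) →+ ZMod n × ZMod m :=
    { toFun v := (v 0 - a * v 1, v 0 - b * v 2)
      map_zero' := by simp
      map_add' u v := by ext <;> simp only [Pi.add_apply, Int.cast_add, Prod.mk_add_mk] <;> ring }
  have hcard : Nat.card (ZMod n × ZMod m) ^ 2 = ∏ i, ![m * n, n, m] i := by
    simp only [Nat.card_prod, Nat.card_zmod, Fin.prod_univ_three, Matrix.cons_val]
    ring
  obtain ⟨v, hv0, hfv, hlt⟩ :=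
    exists_ne_zero_map_eq_zero_of_card_sq_le f hcard.le ⟨1, by simpa using hn⟩
  refine ⟨v 0, v 1, v 2, ?_, sub_eq_zero.1 (congrArg Prod.fst hfv),
    sub_eq_zero.1 (congrArg Prod.snd hfv), by simpa using hlt 0, hlt 1, hlt 2⟩
  contrapose! hv0
  ext i
  fin_cases i <;> simp [hv0]

theorem mul_dvd_sq_add_mul_sq_sub_mul_sq {m n : ℕ} (hmn : m.Coprime n) {a : ZMod n} {b : ZMod m}
    (ha : (-m : ZMod n) = a * a) (hb : (n : ZMod m) = b * b) {x y z : ℤ}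
    (hxa : (x : ZMod n) = a * y) (hxb : (x : ZMod m) = b * z) :
    (m * n : ℤ) ∣ x ^ 2 + m * y ^ 2 - n * z ^ 2 := by
  refine (Nat.isCoprime_iff_coprime.2 hmn).mul_dvd ?_ ?_
  · rw [← ZMod.intCast_zmod_eq_zero_iff_dvd]
    push_cast
    rw [hxb, ZMod.natCast_self]
    linear_combination -(z : ZMod m) ^ 2 * hb
  · rw [← ZMod.intCast_zmod_eq_zero_iff_dvd]
    push_cast
    rw [hxa, ZMod.natCast_self]
    linear_combination -(y : ZMod n) ^ 2 * ha

theorem exists_sq_add_mul_sq_sub_mul_sq_eq_zero_or_mul {m n : ℕ} (hmn : m.Coprime n)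
    (hm0 : m ≠ 0) (hn0 : ¬IsSquare n) (hm : IsSquare (-m : ZMod n)) (hn : IsSquare (n : ZMod m)) :
    ∃ x y z : ℤ, (x ≠ 0 ∨ y ≠ 0 ∨ z ≠ 0) ∧
      (x ^ 2 + m * y ^ 2 - n * z ^ 2 = 0 ∨ x ^ 2 + m * y ^ 2 - n * z ^ 2 = m * n) := by
  obtain ⟨a, ha⟩ := hm
  obtain ⟨b, hb⟩ := hn
  obtain ⟨x, y, z, hxyz, hxa, hxb, hx, hy, hz⟩ := exists_ne_zero_sq_lt_of_not_isSquare hm0 hn0 a b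
  obtain ⟨k, hk⟩ := mul_dvd_sq_add_mul_sq_sub_mul_sq hmn ha hb hxa hxb
  have hmpos : (0 : ℤ) < m := by positivity
  have hnpos : (0 : ℤ) < n := by
    have : n ≠ 0 := fun h => hn0 (h ▸ IsSquare.zero)
    positivity
  have hk_gt : -1 < k := by nlinarith [sq_nonneg x, mul_nonneg hmpos.le (sq_nonneg y)]
  have hk_lt : k < 2 := by nlinarith [mul_nonneg hnpos.le (sq_nonneg z)]
  refine ⟨x, y, z, hxyz, ?_⟩
  obtain rfl | rfl : k = 0 ∨ k = 1 := by omega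
  · exact Or.inl (by rw [hk, mul_zero])
  · exact Or.inr (by rw [hk, mul_one])

theorem exists_sq_add_mul_sq_eq_mul_sq {m n : ℕ} (hmn : m.Coprime n)
    (hm : IsSquare (-m : ZMod n)) (hn : IsSquare (n : ZMod m)) :
    ∃ x y z : ℤ, z ≠ 0 ∧ x ^ 2 + m * y ^ 2 = n * z ^ 2 := by
  by_cases hsq : IsSquare n
  · obtain ⟨k, rfl⟩ := hsq
    exact ⟨k, 0, 1, one_ne_zero, by push_cast; ring⟩
  have hm0 : m ≠ 0 := by
    rintro rfl
    exact hsq ((Nat.coprime_zero_left n).1 hmn ▸ IsSquare.one)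
  obtain ⟨x, y, z, hxyz, h | h⟩ :=
    exists_sq_add_mul_sq_sub_mul_sq_eq_zero_or_mul hmn hm0 hsq hm hn
  · refine ⟨x, y, z, ?_, by linarith⟩
    rintro rfl
    have hx : x ^ 2 = 0 := by
      have : 0 ≤ (m : ℤ) * y ^ 2 := by positivity
      linarith [sq_nonneg x]
    simp_all
  · -- Multiply `x² + m y² = n (z² + m)` by the norm `z² + m` and use Brahmagupta's identity.
    refine ⟨x * z + m * y, x - y * z, z ^ 2 + m, by positivity, ?_⟩
    linear_combination (z ^ 2 + m) * h

/-! ### Sums of three squares -/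

theorem jacobiSym_natCast_eq_one_of_dvd_add_one {a b : ℕ} (ha : a % 4 = 1) (hb : Odd b)
    (h : a ∣ b + 1) : jacobiSym a b = 1 := by
  have hmod : (b : ℤ) ≡ -1 [ZMOD a] := by
    rw [Int.modEq_comm, Int.modEq_iff_dvd, sub_neg_eq_add]
    exact_mod_cast h
  rw [jacobiSym.quadratic_reciprocity_one_mod_four ha hb, jacobiSym.mod_left' hmod,
    jacobiSym.at_neg_one (Nat.odd_iff.2 (by omega)), ZMod.χ₄_nat_one_mod_four ha]

theorem exists_prime_add_one_eq_mul {n k : ℕ} (hn : n ≠ 0) (hk : k ≠ 0) {c : ℤ}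
    (hc : IsCoprime (n * c - 1) (k : ℤ)) :
    ∃ p d : ℕ, p.Prime ∧ p + 1 = n * d ∧ d ≡ c [ZMOD k] := by
  have hcop : IsCoprime (n * c - 1) ((n * k : ℕ) : ℤ) := by
    push_cast
    exact IsCoprime.mul_right ⟨-1, c, by ring⟩ hc
  obtain ⟨p, -, hp, hpm⟩ := Nat.forall_exists_prime_gt_and_zmodEq 0 (mul_ne_zero hn hk) hcop
  have hpm' : ((p + 1 : ℕ) : ℤ) ≡ n * c [ZMOD n * k] := by
    simpa using hpm.add_right 1
  obtain ⟨d, hd⟩ : n ∣ p + 1 := by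
    have := (hpm'.of_mul_right (k : ℤ)).dvd
    exact Int.natCast_dvd_natCast.1 ((dvd_sub_right (dvd_mul_right _ c)).1 this)
  refine ⟨p, d, hp, hd, ?_⟩
  rw [hd, Nat.cast_mul] at hpm'
  exact hpm'.mul_left_cancel' (by positivity)

theorem exists_prime_mod_four_eq_one_add_one_eq_mul {n : ℕ} {c : ℤ} (hc : n * c % 4 = 2) :
    ∃ p d : ℕ, p.Prime ∧ p % 4 = 1 ∧ p + 1 = n * d ∧ d % 4 = c % 4 := by
  have hn : n ≠ 0 := by
    rintro rfl
    simp at hc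
  obtain ⟨p, d, hp, hpd, hd⟩ := exists_prime_add_one_eq_mul (k := 4) (c := c) hn (by norm_num)
    ⟨1, -(n * c / 4), by push_cast; omega⟩
  have hp4 : ((p + 1 : ℕ) : ℤ) % 4 = 2 := by
    rw [hpd, ← hc, Nat.cast_mul]
    exact hd.mul_left _
  exact ⟨p, d, hp, by omega, hpd, hd⟩

theorem exists_prime_dvd_add_one_jacobiSym_eq_one {n : ℕ} (hn : n % 4 = 1 ∨ n % 4 = 2) :
    ∃ p : ℕ, p.Prime ∧ p % 4 = 1 ∧ n ∣ p + 1 ∧ jacobiSym n p = 1 := by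
  obtain hn1 | hn2 := hn
  · obtain ⟨p, d, hp, hp4, hpd, -⟩ :=
      exists_prime_mod_four_eq_one_add_one_eq_mul (n := n) (c := 2) (by omega)
    have hdvd : n ∣ p + 1 := ⟨d, hpd⟩
    exact ⟨p, hp, hp4, hdvd,
      jacobiSym_natCast_eq_one_of_dvd_add_one hn1 (Nat.odd_iff.2 (by omega)) hdvd⟩
  · -- Reciprocity applies to the odd cofactor `d` of `n` in `p + 1` rather than to the even `n`.
    obtain ⟨p, d, hp, hp4, hpd, hd⟩ :=
      exists_prime_mod_four_eq_one_add_one_eq_mul (n := n) (c := 1) (by omega)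
    have hdp : jacobiSym d p = 1 := jacobiSym_natCast_eq_one_of_dvd_add_one (by omega)
      (Nat.odd_iff.2 (by omega)) ⟨n, by rw [hpd, mul_comm]⟩
    refine ⟨p, hp, hp4, ⟨d, hpd⟩, ?_⟩
    calc jacobiSym n p = jacobiSym n p * jacobiSym d p := by rw [hdp, mul_one]
      _ = jacobiSym (p + 1 : ℕ) p := by rw [← jacobiSym.mul_left, hpd, Nat.cast_mul]
      _ = jacobiSym 1 p := jacobiSym.mod_left' (by simp)
      _ = 1 := jacobiSym.one_left p

theorem exists_sq_add_sq_add_sq_eq {n : ℕ} (hn : n % 4 = 1 ∨ n % 4 = 2) :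
    ∃ u v w : ℤ, u ^ 2 + v ^ 2 + w ^ 2 = n := by
  obtain ⟨p, hp, hp4, hdvd, hJ⟩ := exists_prime_dvd_add_one_jacobiSym_eq_one hn
  have : Fact p.Prime := ⟨hp⟩
  have hsq : IsSquare (n : ZMod p) := by simpa using ZMod.isSquare_of_jacobiSym_eq_one hJ
  have hcop : p.Coprime n := Nat.Coprime.coprime_dvd_right hdvd (by simp)
  have hneg : (-p : ZMod n) = 1 := by
    have : ((p + 1 : ℕ) : ZMod n) = 0 := (ZMod.natCast_eq_zero_iff _ _).2 hdvd
    push_cast at this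
    linear_combination -this
  obtain ⟨x, y, z, hz, hxyz⟩ := exists_sq_add_mul_sq_eq_mul_sq hcop (hneg ▸ IsSquare.one) hsq
  obtain ⟨a, b, hab⟩ := Nat.Prime.sq_add_sq (p := p) (by omega)
  have hsum : ∑ i, ![x, a * y, b * y] i ^ 2 = (n : ℤ) * (z.natAbs : ℤ) ^ 2 := by
    simp only [Fin.sum_univ_three, Matrix.cons_val, Int.natAbs_sq, ← hxyz, ← hab, Nat.cast_add,
      Nat.cast_pow]
    ring
  obtain ⟨w, hw⟩ := exists_sum_sq_eq_of_sum_sq_eq_mul_sq (by simp) (Int.natAbs_ne_zero.2 hz) hsum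
  exact ⟨w 0, w 1, w 2, by rw [← hw, Fin.sum_univ_three]⟩

/-! ### Sums of three octagonal numbers -/

/-- The generalized octagonal number `P₈(x)`, for an arbitrary integer index `x`. -/
def octagonal (x : ℤ) : ℤ := 3 * x ^ 2 - 2 * x

theorem octagonal_nonneg (x : ℤ) : 0 ≤ octagonal x := by
  unfold octagonal
  rcases le_or_gt x 0 with h | h <;> nlinarith

theorem octagonal_le_one_of_le_four {x : ℤ} (hx : octagonal x ≤ 4) : octagonal x ≤ 1 := by
  unfold octagonal at *
  have hlower : -1 < x := by nlinarith
  have hupper : x < 2 := by nlinarith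
  interval_cases x <;> norm_num

theorem octagonal_add_add_ne_four (z t s : ℤ) : octagonal z + octagonal t + octagonal s ≠ 4 := by
  intro h
  have hz := octagonal_nonneg z
  have ht := octagonal_nonneg t
  have hs := octagonal_nonneg s
  have hz' := octagonal_le_one_of_le_four (x := z) (by linarith)
  have ht' := octagonal_le_one_of_le_four (x := t) (by linarith)
  have hs' := octagonal_le_one_of_le_four (x := s) (by linarith)
  linarith

theorem exists_three_mul_octagonal_add_one_eq_sq {u : ℤ} (hu : ¬3 ∣ u) :
    ∃ z, 3 * octagonal z + 1 = u ^ 2 := by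
  obtain ⟨k, rfl | rfl⟩ : ∃ k, u = 3 * k - 1 ∨ u = -(3 * k - 1) := by
    obtain h | h : u % 3 = 1 ∨ u % 3 = 2 := by omega
    · exact ⟨-(u / 3), Or.inr (by omega)⟩
    · exact ⟨u / 3 + 1, Or.inl (by omega)⟩
  all_goals exact ⟨k, by unfold octagonal; ring⟩

theorem sq_dvd_sq_sub_mul_sq_of_legendreSym_eq_neg_one {p : ℕ} [Fact p.Prime] {a : ℤ}
    (ha : legendreSym p a = -1) {x y : ℤ} (h : (p : ℤ) ∣ x ^ 2 - a * y ^ 2) :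
    (p : ℤ) ^ 2 ∣ x ^ 2 - a * y ^ 2 := by
  obtain ⟨hx, hy⟩ := legendreSym.prime_dvd_of_eq_neg_one ha h
  exact dvd_sub (pow_dvd_pow_of_dvd hx 2) (dvd_mul_of_dvd_right (pow_dvd_pow_of_dvd hy 2) a)

theorem nine_dvd_sq_add_sq_add_sq {u v w : ℤ} (hu : 3 ∣ u) (h : 3 ∣ u ^ 2 + v ^ 2 + w ^ 2) :
    9 ∣ u ^ 2 + v ^ 2 + w ^ 2 := by
  have hu9 : 3 ^ 2 ∣ u ^ 2 := pow_dvd_pow_of_dvd hu 2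
  have hvw : 3 ^ 2 ∣ v ^ 2 - -1 * w ^ 2 :=
    sq_dvd_sq_sub_mul_sq_of_legendreSym_eq_neg_one (p := 3) (by norm_num) (by push_cast; omega)
  omega

theorem exists_octagonal_add_add_eq {m : ℕ} (h4 : m % 4 = 1 ∨ m % 4 = 2) (h3 : m % 3 ≠ 2) :
    ∃ z t s : ℤ, octagonal z + octagonal t + octagonal s = m := by
  obtain ⟨u, v, w, h⟩ := exists_sq_add_sq_add_sq_eq (n := 3 * m + 3) (by omega)
  push_cast at h
  have hndvd {a b c : ℤ} (habc : a ^ 2 + b ^ 2 + c ^ 2 = 3 * m + 3) : ¬3 ∣ a := fun ha => by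
    have := nine_dvd_sq_add_sq_add_sq (v := b) (w := c) ha (by omega)
    omega
  obtain ⟨z, hz⟩ := exists_three_mul_octagonal_add_one_eq_sq (hndvd h)
  obtain ⟨t, ht⟩ := exists_three_mul_octagonal_add_one_eq_sq
    (hndvd (a := v) (b := u) (c := w) (by linarith))
  obtain ⟨s, hs⟩ := exists_three_mul_octagonal_add_one_eq_sq
    (hndvd (a := w) (b := u) (c := v) (by linarith))
  exact ⟨z, t, s, by linarith⟩

/-! ### The quinary mixed sum -/

/-- `N` is a value of the quinary mixed sum `x² + 2y² + 5P₈(z) + 5P₈(t) + 5P₈(s)`. -/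
def IsMixedSum (N : ℤ) : Prop :=
  ∃ x y z t s : ℤ, x ^ 2 + 2 * y ^ 2 + 5 * octagonal z + 5 * octagonal t + 5 * octagonal s = N

theorem twentyfive_dvd_sq_add_two_mul_sq {x y : ℤ} (h : 5 ∣ x ^ 2 + 2 * y ^ 2) :
    25 ∣ x ^ 2 + 2 * y ^ 2 := by
  have : Fact (Nat.Prime 5) := ⟨Nat.prime_five⟩
  have hxy : 5 ^ 2 ∣ x ^ 2 - -2 * y ^ 2 :=
    sq_dvd_sq_sub_mul_sq_of_legendreSym_eq_neg_one (p := 5) (by norm_num) (by push_cast; omega)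
  omega

theorem not_isMixedSum_twenty : ¬IsMixedSum 20 := by
  rintro ⟨x, y, z, t, s, h⟩
  have hz := octagonal_nonneg z
  have ht := octagonal_nonneg t
  have hs := octagonal_nonneg s
  have hdvd := twentyfive_dvd_sq_add_two_mul_sq (x := x) (y := y) (by omega)
  have hxy : 0 ≤ x ^ 2 + 2 * y ^ 2 := by positivity
  exact octagonal_add_add_ne_four z t s (by omega)

theorem isMixedSum_of_lt_hundred {N : ℕ} (hN : N < 100) (hne : N ≠ 20) : IsMixedSum N := by
  have hsmall : ∀ N < 100, N ≠ 20 → ∃ x < 10, ∃ y < 8,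
      ∃ z ∈ [0, 1, -1, 2], ∃ t ∈ [0, 1], ∃ s ∈ [0, 1],
        ((x : ℕ) : ℤ) ^ 2 + 2 * ((y : ℕ) : ℤ) ^ 2 +
          5 * octagonal z + 5 * octagonal t + 5 * octagonal s = ((N : ℕ) : ℤ) := by
    decide +kernel
  obtain ⟨x, -, y, -, z, -, t, -, s, -, h⟩ := hsmall N hN hne
  exact ⟨x, y, z, t, s, h⟩

theorem exists_sq_add_two_mul_sq_add_five_mul_eq {N : ℕ} (hN : 100 ≤ N) :
    ∃ x y m : ℕ, x ^ 2 + 2 * y ^ 2 + 5 * m = N ∧ (m % 4 = 1 ∨ m % 4 = 2) ∧ m % 3 ≠ 2 := by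
  have hresidue : ∀ r < 60, ∃ x ≤ 10, ∃ y ≤ 7, x ^ 2 + 2 * y ^ 2 ≤ 100 ∧
      ∃ k < 12, (k % 4 = 1 ∨ k % 4 = 2) ∧ k % 3 ≠ 2 ∧ (x ^ 2 + 2 * y ^ 2 + 5 * k) % 60 = r := by
    decide +kernel
  obtain ⟨x, -, y, -, hle, k, -, h4, h3, hr⟩ := hresidue (N % 60) (Nat.mod_lt _ (by norm_num))
  exact ⟨x, y, (N - (x ^ 2 + 2 * y ^ 2)) / 5, by omega, by omega, by omega⟩

theorem isMixedSum_of_hundred_le {N : ℕ} (hN : 100 ≤ N) : IsMixedSum N := by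
  obtain ⟨x, y, m, hm, h4, h3⟩ := exists_sq_add_two_mul_sq_add_five_mul_eq hN
  obtain ⟨z, t, s, hzts⟩ := exists_octagonal_add_add_eq h4 h3
  refine ⟨x, y, z, t, s, ?_⟩
  rw [← hm]
  push_cast
  linarith

theorem exceptions_1_2_5_5_5 :
    ∀ N : ℤ, 0 ≤ N →
      ((∃ x y z t s : ℤ,
          x ^ 2 + 2 * y ^ 2 + 5 * (3 * z ^ 2 - 2 * z) +
            5 * (3 * t ^ 2 - 2 * t) + 5 * (3 * s ^ 2 - 2 * s) = N) ↔
        N ≠ 20) := by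
  intro N hN
  change IsMixedSum N ↔ N ≠ 20
  refine ⟨?_, fun hne => ?_⟩
  · rintro h rfl
    exact not_isMixedSum_twenty h
  · lift N to ℕ using hN
    obtain hlt | hle := lt_or_ge N 100
    · exact isMixedSum_of_lt_hundred hlt (by exact_mod_cast hne)
    · exact isMixedSum_of_hundred_le hle
end
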